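/- Let ⟨α,α'⟩ and ⟨β,β'⟩ be (m,n)-shuffles with ⟨β,β'⟩ < ⟨α,α'⟩. Then ⟨β,β'⟩ is an immediate predecessor of ⟨α,α'⟩ if and only if there is exactly one index j with β(j) ≠ α(j); and in that case this j lies in ⌞⟨α,α'⟩ and satisfies α(j) = β(j) + 1. -/

import Mathlib

/-- Extend a map `Fin (N+1) → Fin (M+1)` to a `ℕ`-valued map on all of `ℕ`,
clamping the input to the range `{0, …, N}`. -/
def extendFin {N M : ℕ} (f : Fin (N + 1) → Fin (M + 1)) (i : ℕ) : ℕ :=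
  (f ⟨min i N, Nat.lt_succ_of_le (min_le_right i N)⟩ : ℕ)

/-- `⟨α, α'⟩` is an `(m,n)`-shuffle: both maps are monotone surjections and
`α i + α' i = i` for all `i`. -/
def IsShuffle (m n : ℕ) (α : Fin (m + n + 1) → Fin (m + 1))
    (α' : Fin (m + n + 1) → Fin (n + 1)) : Prop :=
  Monotone α ∧ Monotone α' ∧ Function.Surjective α ∧ Function.Surjective α' ∧
    ∀ i : Fin (m + n + 1), (α i : ℕ) + (α' i : ℕ) = (i : ℕ)

/-- The pointwise order on `(m,n)`-shuffles (a shuffle is determined by its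
first component). -/
def ShuffleLE (m n : ℕ) (α β : Fin (m + n + 1) → Fin (m + 1)) : Prop :=
  ∀ i, α i ≤ β i

/-- The strict pointwise order on `(m,n)`-shuffles. -/
def ShuffleLT (m n : ℕ) (α β : Fin (m + n + 1) → Fin (m + 1)) : Prop :=
  ShuffleLE m n α β ∧ α ≠ β

/-- The lower-right corner set `⌞⟨α,α'⟩`: all `i` with `1 ≤ i ≤ m+n-1` such that
`α(i+1) = α(i) = α(i-1)+1`. -/
def lrCorner (m n : ℕ) (α : Fin (m + n + 1) → Fin (m + 1)) : Set ℕ :=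
  {i | 1 ≤ i ∧ i + 1 ≤ m + n ∧
    extendFin α (i + 1) = extendFin α i ∧ extendFin α i = extendFin α (i - 1) + 1}

/-- The upper-left corner set `⌜⟨α,α'⟩`: all `i` with `1 ≤ i ≤ m+n-1` such that
`α(i+1) = α(i)+1 = α(i-1)+1`. -/
def ulCorner (m n : ℕ) (α : Fin (m + n + 1) → Fin (m + 1)) : Set ℕ :=
  {i | 1 ≤ i ∧ i + 1 ≤ m + n ∧
    extendFin α (i + 1) = extendFin α i + 1 ∧ extendFin α i = extendFin α (i - 1)}

/-- `⟨β,β'⟩` is an immediate predecessor of `⟨α,α'⟩`: it is a shuffle, `β < α`,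
and no shuffle lies strictly between them. -/
def IsImmPred (m n : ℕ)
    (β : Fin (m + n + 1) → Fin (m + 1)) (β' : Fin (m + n + 1) → Fin (n + 1))
    (α : Fin (m + n + 1) → Fin (m + 1)) (α' : Fin (m + n + 1) → Fin (n + 1)) : Prop :=
  IsShuffle m n β β' ∧ ShuffleLT m n β α ∧
    ∀ (γ : Fin (m + n + 1) → Fin (m + 1)) (γ' : Fin (m + n + 1) → Fin (n + 1)),
      IsShuffle m n γ γ' → ¬ (ShuffleLT m n β γ ∧ ShuffleLT m n γ α)

/-- `⟨γ,γ'⟩` is an immediate successor of `⟨α,α'⟩`: it is a shuffle, `α < γ`,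
and no shuffle lies strictly between them. -/
def IsImmSucc (m n : ℕ)
    (γ : Fin (m + n + 1) → Fin (m + 1)) (γ' : Fin (m + n + 1) → Fin (n + 1))
    (α : Fin (m + n + 1) → Fin (m + 1)) (α' : Fin (m + n + 1) → Fin (n + 1)) : Prop :=
  IsShuffle m n γ γ' ∧ ShuffleLT m n α γ ∧
    ∀ (δ : Fin (m + n + 1) → Fin (m + 1)) (δ' : Fin (m + n + 1) → Fin (n + 1)),
      IsShuffle m n δ δ' → ¬ (ShuffleLT m n α δ ∧ ShuffleLT m n δ γ)

/-!
A shuffle `β` is an immediate predecessor of `α` exactly when `β ⋖ α` holds in the product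
order on all maps. View `α` as a lattice path with height `α - α'`. Among the indices where
`β < α`, one of maximal `α`-height is a lower-right corner of `α`: otherwise a neighbouring index is
higher and `β < α` still holds there. Lowering `α` by one at that corner gives a shuffle `γ` with
`β ≤ γ ⋖ α`, so an immediate predecessor must be `γ`. Conversely, since the values of a shuffle
increase by at most one per step, a shuffle below `α` that agrees with `α` away from `j` can only
differ from it by one at `j`, and `j` is then a corner.
-/

open Function Order

section Update

variable {ι κ : Type*} [DecidableEq ι] {f : ι → κ}

theorem surjective_update_of_apply_eq {j k : ι} (hf : Surjective f) (hkj : k ≠ j)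
    (hfk : f k = f j) (v : κ) : Surjective (update f j v) := by
  intro y
  obtain ⟨i, rfl⟩ := hf y
  obtain rfl | hij := eq_or_ne i j
  · exact ⟨k, by rw [update_of_ne hkj, hfk]⟩
  · exact ⟨i, update_of_ne hij v f⟩

variable [PartialOrder ι] [Preorder κ]

theorem monotone_update {j : ι} {v : κ} (hf : Monotone f) (hlt : ∀ i < j, f i ≤ v)
    (hgt : ∀ i, j < i → v ≤ f i) : Monotone (update f j v) := by
  intro x y hxy
  obtain rfl | hx := eq_or_ne j x <;> obtain rfl | hy := eq_or_ne j y
  · rfl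
  · simpa only [update_self, update_of_ne hy.symm] using hgt y (hxy.lt_of_ne hy)
  · simpa only [update_self, update_of_ne hx.symm] using hlt x (hxy.lt_of_ne' hx)
  · simpa only [update_of_ne hx.symm, update_of_ne hy.symm] using hf hxy

theorem monotone_update_pred [PredOrder ι] (hf : Monotone f) (j : ι) :
    Monotone (update f j (f (pred j))) :=
  monotone_update hf (fun _ hi ↦ hf (le_pred_of_lt hi)) fun _ hi ↦ hf ((pred_le _).trans hi.le)

theorem monotone_update_succ [SuccOrder ι] (hf : Monotone f) (j : ι) :
    Monotone (update f j (f (succ j))) :=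
  monotone_update hf (fun _ hi ↦ hf (hi.le.trans (le_succ j))) fun _ hi ↦ hf (succ_le_of_lt hi)

end Update

theorem existsUnique_ne_of_covBy {ι : Type*} {π : ι → Type*} [∀ i, PartialOrder (π i)]
    {f g : ∀ i, π i} (h : f ⋖ g) : ∃! i, f i ≠ g i := by
  obtain ⟨i, hi, heq⟩ := Pi.covBy_iff.1 h
  exact ⟨i, hi.ne, fun k hk ↦ of_not_not fun hki ↦ hk (heq k hki)⟩

theorem fin_val_orderPred {N : ℕ} (i : Fin (N + 1)) : ((pred i : Fin (N + 1)) : ℕ) = i - 1 := by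
  cases i using Fin.cases <;> simp

theorem fin_val_orderSucc {N : ℕ} (i : Fin (N + 1)) :
    ((succ i : Fin (N + 1)) : ℕ) = min ((i : ℕ) + 1) N := by
  cases i using Fin.lastCases with
  | last => simp
  | cast i => simp [Nat.succ_le_of_lt i.is_lt]

section ExtendFin

variable {N M : ℕ} (f : Fin (N + 1) → Fin (M + 1)) (i : Fin (N + 1))

theorem extendFin_eq_of_min_eq {k : ℕ} (h : min k N = i) : extendFin f k = f i :=
  congrArg (fun x ↦ (f x : ℕ)) (Fin.ext h)

theorem extendFin_val : extendFin f i = f i :=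
  extendFin_eq_of_min_eq f i (by omega)

theorem extendFin_val_sub_one : extendFin f (i - 1) = f (pred i) :=
  extendFin_eq_of_min_eq f (pred i) (by rw [fin_val_orderPred]; omega)

theorem extendFin_val_add_one : extendFin f (i + 1) = f (succ i) :=
  extendFin_eq_of_min_eq f (succ i) (fin_val_orderSucc i).symm

end ExtendFin

section Shuffle

variable {m n : ℕ} {α β : Fin (m + n + 1) → Fin (m + 1)} {α' β' : Fin (m + n + 1) → Fin (n + 1)}
  {j : Fin (m + n + 1)}

theorem val_mem_lrCorner_iff : (j : ℕ) ∈ lrCorner m n α ↔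
    1 ≤ (j : ℕ) ∧ (j : ℕ) + 1 ≤ m + n ∧ (α (succ j) : ℕ) = α j ∧ (α j : ℕ) = α (pred j) + 1 := by
  simp only [lrCorner, Set.mem_ofPred_eq, extendFin_val, extendFin_val_sub_one,
    extendFin_val_add_one]

theorem shuffleLT_iff_lt : ShuffleLT m n β α ↔ β < α :=
  (lt_iff_le_and_ne (a := β) (b := α)).symm

namespace IsShuffle

theorem val_add_val (hα : IsShuffle m n α α') (i : Fin (m + n + 1)) : (α i : ℕ) + α' i = i :=
  hα.2.2.2.2 i

theorem val_add_le_val_add (hα : IsShuffle m n α α') {i k : Fin (m + n + 1)} (hik : i ≤ k) :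
    (α k : ℕ) + i ≤ α i + k := by
  have hmono : (α' i : ℕ) ≤ α' k := hα.2.1 hik
  have hi := hα.val_add_val i
  have hk := hα.val_add_val k
  omega

theorem val_le_val_pred_add_one (hα : IsShuffle m n α α') (j : Fin (m + n + 1)) :
    (α j : ℕ) ≤ α (pred j) + 1 := by
  have h := hα.val_add_le_val_add (pred_le j)
  rw [fin_val_orderPred] at h
  omega

theorem val_succ_le_val_add_one (hα : IsShuffle m n α α') (j : Fin (m + n + 1)) :
    (α (succ j) : ℕ) ≤ α j + 1 := by
  have h := hα.val_add_le_val_add (le_succ j)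
  rw [fin_val_orderSucc] at h
  omega

theorem val_pred_le_val (hα : IsShuffle m n α α') (j : Fin (m + n + 1)) : (α (pred j) : ℕ) ≤ α j :=
  hα.1 (pred_le j)

theorem val_le_val_succ (hα : IsShuffle m n α α') (j : Fin (m + n + 1)) :
    (α j : ℕ) ≤ α (succ j) :=
  hα.1 (le_succ j)

theorem one_le_and_add_one_le_of_lt (hα : IsShuffle m n α α') (hβ : IsShuffle m n β β')
    (hj : β j < α j) : 1 ≤ (j : ℕ) ∧ (j : ℕ) + 1 ≤ m + n := by
  have hαj := hα.val_add_val j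
  have hβj := hβ.val_add_val j
  omega

theorem exists_val_mem_lrCorner_of_lt (hα : IsShuffle m n α α') (hβ : IsShuffle m n β β')
    (hlt : β < α) : ∃ j : Fin (m + n + 1), (j : ℕ) ∈ lrCorner m n α ∧ β j < α j := by
  obtain ⟨i₀, hi₀⟩ := (Pi.lt_def.1 hlt).2
  obtain ⟨j, hj : β j < α j, hmax⟩ := Set.exists_max_image {i | β i < α i}
    (fun i ↦ (α i : ℤ) - α' i) (Set.toFinite _) ⟨i₀, hi₀⟩
  obtain ⟨hj_pos, hj_lt⟩ := hα.one_le_and_add_one_le_of_lt hβ hj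
  have hsum := hα.val_add_val j
  refine ⟨j, val_mem_lrCorner_iff.2 ⟨hj_pos, hj_lt, ?_, ?_⟩, hj⟩
  · by_contra hne
    have hα_succ : (α (succ j) : ℕ) = α j + 1 := by
      have := hα.val_le_val_succ j
      have := hα.val_succ_le_val_add_one j
      omega
    have hmem : β (succ j) < α (succ j) := by
      have := hβ.val_succ_le_val_add_one j
      omega
    have hheight := hmax _ hmem
    have hsum_succ := hα.val_add_val (succ j)
    rw [fin_val_orderSucc] at hsum_succ
    omega
  · by_contra hne
    have hα_pred : (α (pred j) : ℕ) = α j := by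
      have := hα.val_pred_le_val j
      have := hα.val_le_val_pred_add_one j
      omega
    have hmem : β (pred j) < α (pred j) := by
      have := hβ.val_pred_le_val j
      omega
    have hheight := hmax _ hmem
    have hsum_pred := hα.val_add_val (pred j)
    rw [fin_val_orderPred] at hsum_pred
    omega

theorem update_of_val_mem_lrCorner (hα : IsShuffle m n α α') (hj : (j : ℕ) ∈ lrCorner m n α) :
    IsShuffle m n (update α j (α (pred j))) (update α' j (α' (succ j))) := by
  obtain ⟨hj_pos, hj_lt, hα_succ, hα_pred⟩ := val_mem_lrCorner_iff.1 hj
  have hval_pred := fin_val_orderPred j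
  have hval_succ := fin_val_orderSucc j
  have hsum_pred := hα.val_add_val (pred j)
  have hsum := hα.val_add_val j
  have hsum_succ := hα.val_add_val (succ j)
  have hpred_ne : pred j ≠ j := Fin.ne_of_val_ne (by omega)
  have hsucc_ne : succ j ≠ j := Fin.ne_of_val_ne (by omega)
  have hα'_pred : α' (pred j) = α' j := Fin.ext (by omega)
  obtain ⟨hmono, hmono', hsurj, hsurj', hval⟩ := hα
  refine ⟨monotone_update_pred hmono j, monotone_update_succ hmono' j,
    surjective_update_of_apply_eq hsurj hsucc_ne (Fin.ext hα_succ) _,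
    surjective_update_of_apply_eq hsurj' hpred_ne hα'_pred _, fun i ↦ ?_⟩
  obtain rfl | hij := eq_or_ne i j
  · simp only [update_self]
    omega
  · simpa only [update_of_ne hij] using hval i

theorem val_mem_lrCorner_and_val_eq_add_one (hα : IsShuffle m n α α') (hβ : IsShuffle m n β β')
    (hj : β j < α j) (heq : ∀ i ≠ j, β i = α i) :
    (j : ℕ) ∈ lrCorner m n α ∧ (α j : ℕ) = β j + 1 := by
  obtain ⟨hj_pos, hj_lt⟩ := hα.one_le_and_add_one_le_of_lt hβ hj
  have hpred : β (pred j) = α (pred j) :=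
    heq _ (Fin.ne_of_val_ne (by rw [fin_val_orderPred]; omega))
  have hsucc : β (succ j) = α (succ j) :=
    heq _ (Fin.ne_of_val_ne (by rw [fin_val_orderSucc]; omega))
  have hβ_pred := hβ.val_pred_le_val j
  have hβ_succ := hβ.val_succ_le_val_add_one j
  rw [hpred] at hβ_pred
  rw [hsucc] at hβ_succ
  have hα_pred := hα.val_le_val_pred_add_one j
  have hα_succ := hα.val_le_val_succ j
  rw [val_mem_lrCorner_iff]
  omega

theorem covBy_of_existsUnique_ne (hα : IsShuffle m n α α') (hβ : IsShuffle m n β β')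
    (hlt : β < α) (h : ∃! j, β j ≠ α j) : β ⋖ α := by
  obtain ⟨j, hj, huniq⟩ := h
  have heq : ∀ i ≠ j, β i = α i := fun i hij ↦ of_not_not fun hi ↦ hij (huniq i hi)
  have hstep := (hα.val_mem_lrCorner_and_val_eq_add_one hβ ((hlt.le j).lt_of_ne hj) heq).2
  exact Pi.covBy_iff.2 ⟨j, Fin.covBy_iff.2 (Nat.covBy_iff_add_one_eq.2 hstep.symm), heq⟩

theorem isImmPred_iff_covBy (hα : IsShuffle m n α α') (hβ : IsShuffle m n β β') :
    IsImmPred m n β β' α α' ↔ β ⋖ α := by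
  simp only [IsImmPred, shuffleLT_iff_lt]
  refine ⟨fun ⟨_, hlt, hbetween⟩ ↦ ?_, fun h ↦ ⟨hβ, h.lt, fun _ _ _ hγ ↦ h.2 hγ.1 hγ.2⟩⟩
  obtain ⟨j, hcorner, hj⟩ := hα.exists_val_mem_lrCorner_of_lt hβ hlt
  have hα_pred : (α j : ℕ) = α (pred j) + 1 := (val_mem_lrCorner_iff.1 hcorner).2.2.2
  have hcov : update α j (α (pred j)) ⋖ α := Pi.covBy_iff.2
    ⟨j, by simp [hα_pred], fun i hij ↦ update_of_ne hij _ _⟩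
  have hle : β ≤ update α j (α (pred j)) :=
    le_update_iff.2 ⟨Fin.le_def.2 (by omega), fun i _ ↦ hlt.le i⟩
  have heq : β = update α j (α (pred j)) := by
    by_contra hne
    exact hbetween _ _ (hα.update_of_val_mem_lrCorner hcorner) ⟨hle.lt_of_ne hne, hcov.lt⟩
  exact heq ▸ hcov

end IsShuffle

end Shuffle

/-- Let `⟨β,β'⟩ < ⟨α,α'⟩` be shuffles. Then `⟨β,β'⟩` is an immediate predecessor
of `⟨α,α'⟩` iff there is exactly one index where `β` and `α` differ; in that case
this index lies in the lower-right corner set of `⟨α,α'⟩` and `α j = β j + 1`. -/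
theorem immPred_iff_unique_ne (m n : ℕ)
    (α : Fin (m + n + 1) → Fin (m + 1)) (α' : Fin (m + n + 1) → Fin (n + 1))
    (β : Fin (m + n + 1) → Fin (m + 1)) (β' : Fin (m + n + 1) → Fin (n + 1))
    (hα : IsShuffle m n α α') (hβ : IsShuffle m n β β')
    (hlt : ShuffleLT m n β α) :
    (IsImmPred m n β β' α α' ↔ ∃! j : Fin (m + n + 1), β j ≠ α j) ∧
    (IsImmPred m n β β' α α' →
      ∀ j : Fin (m + n + 1), β j ≠ α j →
        (j : ℕ) ∈ lrCorner m n α ∧ (α j : ℕ) = (β j : ℕ) + 1) := by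
  rw [shuffleLT_iff_lt] at hlt
  rw [hα.isImmPred_iff_covBy hβ]
  refine ⟨⟨existsUnique_ne_of_covBy, hα.covBy_of_existsUnique_ne hβ hlt⟩, fun hcov j hj ↦ ?_⟩
  have heq : ∀ i ≠ j, β i = α i := fun i hij ↦
    of_not_not fun hi ↦ hij ((existsUnique_ne_of_covBy hcov).unique hi hj)
  exact hα.val_mem_lrCorner_and_val_eq_add_one hβ ((hlt.le j).lt_of_ne hj) heq
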